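/- arXiv:1703.00546 — 2 statements merged into one kernel-verified Lean document; each statement's English description precedes it below -/
import Mathlib

section
/- Let H be a complex Hilbert space, 1 ≤ d ≤ n, and let x_1,…,x_n be positive bounded operators on H. Then ‖P_d(x_1,…,x_n)‖^{1/d} ≤ d·‖P_1(x_1,…,x_n)‖, where ‖·‖ is the operator norm. -/
open scoped BigOperators

/-- The average product
`P_d(x_1,…,x_n) = ((n-d)!/n!) ∑_{i injective} x_{i 1} x_{i 2} ⋯ x_{i d}`,
the sum running over all `d`-tuples of pairwise distinct indices in `{1,…,n}`. -/
noncomputable def avgProd {A : Type*} [Ring A] [Module ℝ A] (n d : ℕ)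
    (x : Fin n → A) : A :=
  ((Nat.factorial (n - d) : ℝ) / (Nat.factorial n : ℝ)) •
    ∑ i ∈ Finset.univ.filter (fun i : Fin d → Fin n => Function.Injective i),
      ((List.finRange d).map (fun k => x (i k))).prod

/-!
If `x j ≥ 0`, then `-∑ x j ≤ ∑ ± x j ≤ ∑ x j`, so every signed sum of the `x j` has norm at most
`C = ‖∑ x j‖`. This unconditional bound is all that is needed. For independent random signs `ε`,
the indicator of `i a = i b` is the expectation of `ε (i a) * ε (i b)`, so imposing the coincidence
`i a = i b` on a sum of products `x (i 1) ⋯ x (i d)` amounts to averaging over sign changes of the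
factors in positions `a` and `b`, and does not increase a bound uniform in the signs. On the other
hand, on tuples injective on `K`, injectivity on `K ∪ {a}` is `1 - ∑ b ∈ K, 𝟙[i a = i b]`. Adding
the positions one at a time, each step multiplies the bound by `1 + #K`, and the sum over injective
tuples is at most `d! * C ^ d`. Finally `d! (n - d)! / n! = (n.choose d)⁻¹ ≤ (d / n) ^ d`.
-/

open Finset

open scoped Nat

lemma sum_units_apply_mul_apply {κ : Type*} [Fintype κ] [DecidableEq κ] (j k : κ) :
    ∑ ε : κ → ℤˣ, ((ε j * ε k : ℤˣ) : ℤ) = if j = k then (Fintype.card (κ → ℤˣ) : ℤ) else 0 := by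
  split_ifs with hjk
  · simp [hjk]
  · let flip : κ → ℤˣ := Pi.mulSingle j (-1)
    have flip_sign (ε : κ → ℤˣ) :
        (((flip * ε) j * (flip * ε) k : ℤˣ) : ℤ) = -((ε j * ε k : ℤˣ) : ℤ) := by
      simp [flip, Pi.mulSingle_eq_of_ne' hjk]
    have sum_flip := Equiv.sum_comp (Equiv.mulLeft flip) fun ε : κ → ℤˣ => ((ε j * ε k : ℤˣ) : ℤ)
    simp only [Equiv.coe_mulLeft, flip_sign, sum_neg_distrib] at sum_flip
    lia

lemma sum_injOn_insert {ι κ M : Type*} [Fintype ι] [DecidableEq ι] [Fintype κ] [DecidableEq κ]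
    [AddCommGroup M] {K : Finset ι} {a : ι} (ha : a ∉ K) (g : (ι → κ) → M) :
    ∑ i with Set.InjOn i (insert a K : Finset ι), g i =
      ∑ i with Set.InjOn i K, g i - ∑ b ∈ K, ∑ i with Set.InjOn i K ∧ i a = i b, g i := by
  -- An `i` injective on `K` takes the value `i a` at most once on `K`.
  have sum_coincide {i : ι → κ} (hi : Set.InjOn i K) :
      ∑ b ∈ K, (if i a = i b then g i else 0) = if i a ∈ K.image i then g i else 0 := by
    rw [← sum_ite_eq (K.image i) (i a) fun _ => g i, sum_image hi]
  have injOn_insert (i : ι → κ) :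
      Set.InjOn i (insert a K : Finset ι) ↔ Set.InjOn i K ∧ i a ∉ K.image i := by
    simp [Set.injOn_insert (mem_coe.not.2 ha)]
  simp only [injOn_insert, ← filter_filter]
  simp only [sum_filter (fun i : ι → κ => i a = i _)]
  rw [sum_comm, sum_congr rfl fun i hi => sum_coincide (mem_filter.1 hi).2, ← sum_filter,
    eq_sub_iff_add_eq', sum_filter_add_sum_filter_not]

section Multilinear

variable {ι κ G : Type*} {E : ι → Type*} [Fintype ι]
  [∀ k, NormedAddCommGroup (E k)] [∀ k, NormedSpace ℝ (E k)]
  [NormedAddCommGroup G] [NormedSpace ℝ G]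
  {f : ContinuousMultilinearMap ℝ E G} {x : ∀ k, κ → E k}

lemma map_units_smul_univ (s : ι → ℤˣ) (v : ∀ k, E k) :
    f (fun k => s k • v k) = ((∏ k, s k : ℤˣ) : ℤ) • f v := by
  simpa [Units.smul_def, Int.cast_smul_eq_zsmul, ← Int.cast_prod, ← Units.coe_prod]
    using f.map_smul_univ (fun k => ((s k : ℤ) : ℝ)) v

variable [DecidableEq ι] [Fintype κ] [DecidableEq κ]

lemma card_smul_sum_filter_and_eq (P : (ι → κ) → Prop) [DecidablePred P] (a b : ι) :
    Fintype.card (κ → ℤˣ) • ∑ i with P i ∧ i a = i b, f (fun k => x k (i k)) =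
      ∑ ε : κ → ℤˣ, ∑ i with P i, f (fun k =>
        (Pi.mulSingle a ε * Pi.mulSingle b ε : ι → κ → ℤˣ) k (i k) • x k (i k)) := by
  have prod_signs (ε : κ → ℤˣ) (i : ι → κ) :
      ∏ k, (Pi.mulSingle a ε * Pi.mulSingle b ε : ι → κ → ℤˣ) k (i k) = ε (i a) * ε (i b) := by
    simp only [Pi.mul_apply, Pi.mulSingle_apply, prod_mul_distrib, ite_apply, Pi.one_apply]
    simp
  simp_rw [map_units_smul_univ, prod_signs]
  rw [sum_comm]
  simp_rw [← sum_smul, sum_units_apply_mul_apply, ite_smul, zero_smul, ← sum_filter,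
    filter_filter, natCast_zsmul, smul_sum]

lemma norm_sum_filter_and_eq_le {P : (ι → κ) → Prop} [DecidablePred P] {B : ℝ}
    (hB : ∀ s : ι → κ → ℤˣ, ‖∑ i with P i, f (fun k => s k (i k) • x k (i k))‖ ≤ B) (a b : ι) :
    ‖∑ i with P i ∧ i a = i b, f (fun k => x k (i k))‖ ≤ B := by
  have hcard : (0 : ℝ) < Fintype.card (κ → ℤˣ) := by exact_mod_cast Fintype.card_pos
  refine le_of_mul_le_mul_left ?_ hcard
  calc (Fintype.card (κ → ℤˣ) : ℝ) * ‖∑ i with P i ∧ i a = i b, f (fun k => x k (i k))‖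
      = ‖Fintype.card (κ → ℤˣ) • ∑ i with P i ∧ i a = i b, f (fun k => x k (i k))‖ := by
        rw [RCLike.norm_nsmul ℝ, nsmul_eq_mul]
    _ ≤ ∑ _ε : κ → ℤˣ, B := by
        rw [card_smul_sum_filter_and_eq]
        exact norm_sum_le_of_le _ fun ε _ => hB _
    _ = Fintype.card (κ → ℤˣ) * B := by simp

lemma norm_sum_injOn_le {C : ι → ℝ} (hC : ∀ k (s : κ → ℤˣ), ‖∑ j, s j • x k j‖ ≤ C k)
    (K : Finset ι) :
    ‖∑ i with Set.InjOn i K, f (fun k => x k (i k))‖ ≤ (#K)! * (‖f‖ * ∏ k, C k) := by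
  induction K using Finset.induction_on generalizing x with
  | empty =>
    have norm_row_le (k : ι) : ‖∑ j, x k j‖ ≤ C k := by simpa using hC k 1
    calc ‖∑ i with Set.InjOn i (∅ : Finset ι), f (fun k => x k (i k))‖
        = ‖f fun k => ∑ j, x k j‖ := by simp [f.map_sum]
      _ ≤ ‖f‖ * ∏ k, ‖∑ j, x k j‖ := f.le_opNorm _
      _ ≤ ‖f‖ * ∏ k, C k := by gcongr with k; exact norm_row_le k
      _ = (#(∅ : Finset ι))! * (‖f‖ * ∏ k, C k) := by simp
  | insert a K ha ih =>
    have hcoincide (b : ι) :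
        ‖∑ i with Set.InjOn i K ∧ i a = i b, f (fun k => x k (i k))‖ ≤
          (#K)! * (‖f‖ * ∏ k, C k) :=
      norm_sum_filter_and_eq_le (fun s => ih (x := fun k j => s k j • x k j) fun k t => by
        simpa [smul_smul] using hC k (t * s k)) a b
    rw [sum_injOn_insert ha]
    calc _ ≤ (#K)! * (‖f‖ * ∏ k, C k) + ∑ _b ∈ K, (#K)! * (‖f‖ * ∏ k, C k) :=
          (norm_sub_le _ _).trans (add_le_add (ih hC) (norm_sum_le_of_le _ fun b _ => hcoincide b))
      _ = (#(insert a K))! * (‖f‖ * ∏ k, C k) := by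
          rw [sum_const, nsmul_eq_mul, card_insert_of_notMem ha, Nat.factorial_succ]
          push_cast
          ring

end Multilinear

lemma norm_sum_injective_prod_le {κ A : Type*} [Fintype κ] [DecidableEq κ] [NormedRing A]
    [NormedAlgebra ℝ A] {d : ℕ} (hd : 1 ≤ d) {x : κ → A} {C : ℝ}
    (hC : ∀ s : κ → ℤˣ, ‖∑ j, s j • x j‖ ≤ C) :
    ‖∑ i : Fin d → κ with Function.Injective i,
      ((List.finRange d).map fun k => x (i k)).prod‖ ≤ d ! * C ^ d := by
  have hC₀ : 0 ≤ C := (norm_nonneg _).trans (hC 1)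
  have hprod : ‖ContinuousMultilinearMap.mkPiAlgebraFin ℝ d A‖ ≤ 1 :=
    ContinuousMultilinearMap.norm_mkPiAlgebraFin_le_of_pos hd
  calc ‖∑ i : Fin d → κ with Function.Injective i,
        ((List.finRange d).map fun k => x (i k)).prod‖
      ≤ d ! * (‖ContinuousMultilinearMap.mkPiAlgebraFin ℝ d A‖ * C ^ d) := by
        simpa [List.ofFn_eq_map] using
          norm_sum_injOn_le (f := ContinuousMultilinearMap.mkPiAlgebraFin ℝ d A)
            (fun _ => hC) univ
    _ ≤ d ! * (1 * C ^ d) := by gcongr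
    _ = d ! * C ^ d := by rw [one_mul]

lemma pow_le_pow_mul_choose {n d : ℕ} (hdn : d ≤ n) : n ^ d ≤ d ^ d * n.choose d := by
  refine Nat.le_of_mul_le_mul_right ?_ d.factorial_pos
  calc n ^ d * d !
      = ∏ k ∈ range d, n * (d - k) := by
        rw [prod_mul_distrib, prod_const, card_range, ← Nat.descFactorial_eq_prod_range,
          Nat.descFactorial_self]
    _ ≤ ∏ k ∈ range d, d * (n - k) := by
        refine prod_le_prod' fun k _ => ?_
        rw [Nat.mul_sub, Nat.mul_sub, mul_comm n d]
        gcongr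
    _ = d ^ d * n.choose d * d ! := by
        rw [prod_mul_distrib, prod_const, card_range, ← Nat.descFactorial_eq_prod_range,
          Nat.descFactorial_eq_factorial_mul_choose, mul_assoc, mul_comm (d !)]

lemma factorial_div_factorial_mul_factorial_le_pow {n d : ℕ} (hn : n ≠ 0) (hdn : d ≤ n) :
    ((n - d)! / n ! * d ! : ℝ) ≤ (d / n : ℝ) ^ d := by
  have hchoose : (0 : ℝ) < n.choose d := by exact_mod_cast Nat.choose_pos hdn
  have hpow : (n : ℝ) ^ d ≤ d ^ d * n.choose d := by exact_mod_cast pow_le_pow_mul_choose hdn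
  calc ((n - d)! / n ! * d ! : ℝ) = 1 / n.choose d := by
        rw [Nat.cast_choose ℝ hdn]; field_simp
    _ ≤ (d / n : ℝ) ^ d := by
        rw [div_pow, div_le_div_iff₀ hchoose (by positivity), one_mul]
        exact hpow

section avgProd

variable {A : Type*}

lemma avgProd_one [Ring A] [Module ℝ A] {n : ℕ} (hn : n ≠ 0) (x : Fin n → A) :
    avgProd n 1 x = (n : ℝ)⁻¹ • ∑ j, x j := by
  have hcoef : ((n - 1)! : ℝ) / n ! = (n : ℝ)⁻¹ := by
    rw [← Nat.mul_factorial_pred hn, Nat.cast_mul]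
    field_simp
  rw [avgProd, hcoef, filter_true_of_mem fun i _ => Function.injective_of_subsingleton i]
  congr 1
  exact Fintype.sum_equiv (Equiv.funUnique (Fin 1) (Fin n)) _ _ fun i => by
    simp [List.finRange_succ]

lemma norm_avgProd_le [NormedRing A] [NormedAlgebra ℝ A] {n d : ℕ} (hd : 1 ≤ d)
    (hdn : d ≤ n) {x : Fin n → A} {C : ℝ} (hC : ∀ s : Fin n → ℤˣ, ‖∑ j, s j • x j‖ ≤ C) :
    ‖avgProd n d x‖ ≤ (d / n * C) ^ d := by
  have hC₀ : 0 ≤ C := (norm_nonneg _).trans (hC 1)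
  calc ‖avgProd n d x‖ ≤ ((n - d)! / n ! : ℝ) * (d ! * C ^ d) := by
        rw [avgProd, norm_smul, Real.norm_of_nonneg (by positivity)]
        gcongr
        exact norm_sum_injective_prod_le hd hC
    _ = ((n - d)! / n ! * d ! : ℝ) * C ^ d := by rw [mul_assoc]
    _ ≤ (d / n : ℝ) ^ d * C ^ d := by
        gcongr
        exact factorial_div_factorial_mul_factorial_le_pow (by lia) hdn
    _ = (d / n * C) ^ d := by rw [mul_pow]

end avgProd

section CStarAlgebra

variable {A : Type*} [CStarAlgebra A] [PartialOrder A] [StarOrderedRing A]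

lemma norm_le_norm_of_neg_le_of_le {a b : A} (hneg : -b ≤ a) (hle : a ≤ b) : ‖a‖ ≤ ‖b‖ := by
  have two_smul_nonneg : 0 ≤ (2 : ℝ) • b := by
    rw [two_smul]
    exact neg_le_iff_add_nonneg.1 (hneg.trans hle)
  have hb : IsSelfAdjoint b :=
    .of_nonneg ((smul_nonneg_iff_nonneg_of_pos_left two_pos).1 two_smul_nonneg)
  have ha : IsSelfAdjoint a := by simpa using hb.sub (.of_nonneg (sub_nonneg.2 hle))
  have hspec : ∀ t ∈ spectrum ℝ a, ‖id t‖ ≤ ‖b‖ := by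
    intro t ht
    refine abs_le.2 ⟨?_, ?_⟩
    · refine (algebraMap_le_iff_le_spectrum ha).1 ?_ t ht
      rw [map_neg]
      exact (neg_le_neg hb.le_algebraMap_norm_self).trans hneg
    · exact (le_algebraMap_iff_spectrum_le ha).1 (hle.trans hb.le_algebraMap_norm_self) t ht
  rw [← cfc_id ℝ a]
  exact norm_cfc_le (norm_nonneg b) hspec

lemma norm_sum_units_smul_le_norm_sum {κ : Type*} [Fintype κ] {x : κ → A} (hx : ∀ j, 0 ≤ x j)
    (s : κ → ℤˣ) : ‖∑ j, s j • x j‖ ≤ ‖∑ j, x j‖ := by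
  have signed_bounds (j : κ) : -x j ≤ s j • x j ∧ s j • x j ≤ x j := by
    rcases Int.units_eq_one_or (s j) with h | h <;> simp [h, neg_le_self (hx j)]
  refine norm_le_norm_of_neg_le_of_le ?_ (sum_le_sum fun j _ => (signed_bounds j).2)
  rw [← sum_neg_distrib]
  exact sum_le_sum fun j _ => (signed_bounds j).1

theorem norm_avgProd_rpow_le_general (n d : ℕ) (hd : 1 ≤ d) (hdn : d ≤ n) (x : Fin n → A)
    (hx : ∀ j, 0 ≤ x j) :
    ‖avgProd n d x‖ ^ ((1 : ℝ) / d) ≤ (d : ℝ) * ‖avgProd n 1 x‖ := by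
  have hmean : d * ‖avgProd n 1 x‖ = d / n * ‖∑ j, x j‖ := by
    rw [avgProd_one (by lia), norm_smul, Real.norm_of_nonneg (by positivity)]
    ring
  rw [one_div, Real.rpow_inv_le_iff_of_pos (norm_nonneg _) (by positivity) (by exact_mod_cast hd),
    Real.rpow_natCast, hmean]
  exact norm_avgProd_le hd hdn (norm_sum_units_smul_le_norm_sum hx)

end CStarAlgebra

/-- Dimension-free noncommutative AGM inequality (norm version): for positive
bounded operators `x_1, …, x_n` on a complex Hilbert space and `1 ≤ d ≤ n`,
`‖P_d(x_1,…,x_n)‖ ^ (1/d) ≤ d ‖P_1(x_1,…,x_n)‖`. -/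
theorem norm_avgProd_rpow_le {H : Type*} [NormedAddCommGroup H]
    [InnerProductSpace ℂ H] [CompleteSpace H] (n d : ℕ) (hd : 1 ≤ d) (hdn : d ≤ n)
    (x : Fin n → H →L[ℂ] H) (hx : ∀ j, (x j).IsPositive) :
    ‖avgProd n d x‖ ^ ((1 : ℝ) / d) ≤ (d : ℝ) * ‖avgProd n 1 x‖ :=
  norm_avgProd_rpow_le_general n d hd hdn x fun j =>
    (ContinuousLinearMap.nonneg_iff_isPositive _).2 (hx j)
end

section
/- Let H be a complex Hilbert space, 1 ≤ d ≤ n, and let x_1,…,x_n be self-adjoint bounded operators on H such that (i) ∑_{i=1}^n x_i = n·1 (so P_1(x_1,…,x_n) = 1), and (ii) ‖(∑_{i=1}^n x_i²)^{1/2}‖ ≤ n/(3d). Then the arithmetic-geometric mean inequality holds in the order sense: P_d(x_1,…,x_n) ≤ 1, i.e., 1 − P_d(x_1,…,x_n) is a positive operator. -/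
open scoped BigOperators

/-!
Put `y_a = x_a - 1`. These operators have mean zero, and `∑ y_a² ≤ s²` with `s = n / (3d)`.
Averaging the binomial expansion of products of `1 + y_a` gives `P_d(x) = ∑ C(d,k) P_k(y)`, where
`P_0(y) = 1`, `P_1(y) = 0` and `P_2(y) = -(1 / (n(n-1))) ∑ y_a²` is a negative main term.

For `k ≥ 3` the indicator of injectivity of `i` is the signed count of the permutations `σ` with
`i ∘ σ = i` (a determinant). Hence `n(n-1)⋯(n-k+1) P_k(y)` is a signed sum over `σ ∈ S_k` of sums of
words whose letters are the cycles of `σ`. Such a sum vanishes if some letter occurs only once.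
Otherwise every letter but the two outer ones acts as a column, diagonal or row operator of norm at
most `s`, so that `|⟨ξ, P_k(y) ξ⟩| ≤ k! / (n(n-1)⋯(n-k+1)) s^(k-2) ∑ ‖y_a ξ‖²`. Multiplied by
`C(d,k)`, these bounds form a geometric series of ratio `1/3`, which the term `k = 2` absorbs.
-/

section

open Finset Function
open scoped InnerProductSpace

section MarginalSum

variable {B ι M N : Type*} [Fintype B] [DecidableEq B] [Fintype ι] [DecidableEq ι]
  [AddCommMonoid M] [AddCommMonoid N]

/-- The function obtained from `G` by summing out the coordinates in `O`: the discrete analogue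
of `MeasureTheory.lmarginal`, with values in any additive commutative monoid. As there, it is
still a function of all coordinates of `i`, constant in those in `O`. -/
def marginalSum (O : Finset B) (G : (B → ι) → M) (i : B → ι) : M :=
  ∑ j with ∀ b ∉ O, j b = i b, G j

theorem marginalSum_empty (G : (B → ι) → M) (i : B → ι) : marginalSum ∅ G i = G i := by
  simp [marginalSum, ← funext_iff, Finset.filter_eq']

theorem marginalSum_univ (G : (B → ι) → M) (i : B → ι) : marginalSum univ G i = ∑ j, G j := by
  simp [marginalSum]

theorem marginalSum_insert {O : Finset B} {b : B} (hb : b ∉ O) (G : (B → ι) → M) (i : B → ι) :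
    marginalSum (insert b O) G i = ∑ a, marginalSum O G (update i b a) := by
  unfold marginalSum
  rw [← sum_fiberwise _ fun j : B → ι => j b]
  refine sum_congr rfl fun a _ => sum_congr ?_ fun _ _ => rfl
  ext j
  simp only [mem_filter, mem_univ, true_and, mem_insert, update_apply]
  grind

theorem marginalSum_update {O : Finset B} {b : B} (hb : b ∉ O) (G : (B → ι) → M)
    (i : B → ι) (a : ι) :
    marginalSum O G (update i b a) = marginalSum O (fun j => G (update j b a)) i := by
  refine sum_nbij' (fun j => update j b (i b)) (fun j => update j b a) ?_ ?_ ?_ ?_ ?_ <;>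
    simp only [mem_filter, mem_univ, true_and, update_apply] <;> intro j hj
  · grind
  · grind
  · simp [← (hj b hb).trans (if_pos rfl)]
  · simp [← hj b hb]
  · simp [← (hj b hb).trans (if_pos rfl)]

theorem marginalSum_insert' {O : Finset B} {b : B} (hb : b ∉ O) (G : (B → ι) → M)
    (i : B → ι) :
    marginalSum (insert b O) G i = marginalSum O (fun j => ∑ a, G (update j b a)) i := by
  rw [marginalSum_insert hb]
  simp_rw [marginalSum_update hb]
  exact sum_comm

theorem marginalSum_map_of_notMem {F : Type*} [FunLike F M N] [AddMonoidHomClass F M N]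
    {O : Finset B} {b : B} (hb : b ∉ O) (f : ι → F) (G : (B → ι) → M) (i : B → ι) :
    marginalSum O (fun j => f (j b) (G j)) i = f (i b) (marginalSum O G i) := by
  unfold marginalSum
  rw [map_sum]
  exact sum_congr rfl fun j hj => by simp only [(mem_filter.1 hj).2 b hb]

theorem marginalSum_le_const_mul {O : Finset B} {c : ℝ} {G G' : (B → ι) → ℝ}
    (h : ∀ j, G j ≤ c * G' j) (i : B → ι) : marginalSum O G i ≤ c * marginalSum O G' i :=
  (sum_le_sum fun j _ => h j).trans_eq (mul_sum _ _ _).symm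

end MarginalSum

theorem sum_prod_map_eq_zero {B ι A : Type*} [Fintype B] [DecidableEq B] [Fintype ι]
    [Semiring A] {y : ι → A} (hy0 : ∑ a, y a = 0)
    {b : B} {w : List B} (hb : w.count b = 1) :
    ∑ j : B → ι, (w.map fun c => y (j c)).prod = 0 := by
  classical
  obtain ⟨p, q, rfl⟩ := List.append_of_mem (List.count_pos_iff.1 (hb ▸ Nat.one_pos))
  have hpq : b ∉ p ∧ b ∉ q := by
    simpa [List.count_eq_zero, ← add_assoc] using hb
  have hupdate {r : List B} (hr : b ∉ r) (j : B → ι) (a : ι) :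
      (r.map fun c => y (update j b a c)) = r.map fun c => y (j c) :=
    List.map_congr_left fun c hc => by rw [update_of_ne (ne_of_mem_of_not_mem hc hr)]
  rcases isEmpty_or_nonempty (B → ι) with _ | ⟨⟨i⟩⟩
  · simp
  · rw [← marginalSum_univ _ i, ← insert_erase (mem_univ b), marginalSum_insert' (by simp)]
    refine sum_eq_zero fun j _ => ?_
    simp only [List.map_append, List.map_cons, List.prod_append, List.prod_cons,
      hupdate hpq.1, hupdate hpq.2, update_self]
    rw [← mul_sum, ← sum_mul, hy0, zero_mul, mul_zero]

section SquareFunction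

variable {𝕜 ι H : Type*} [RCLike 𝕜] [Fintype ι] [NormedAddCommGroup H] [InnerProductSpace 𝕜 H]
  {x y : ι → H →L[𝕜] H} {s : ℝ}

/-- The square function of the family `y` is at most `s`: for self-adjoint operators on a Hilbert
space this is the operator inequality `∑ y_a² ≤ s²`, stated through the quadratic form. -/
def SquareFunctionLE (y : ι → H →L[𝕜] H) (s : ℝ) : Prop :=
  ∀ v, ∑ a, ‖y a v‖ ^ 2 ≤ s ^ 2 * ‖v‖ ^ 2

theorem inner_sum_sq_apply (hy : ∀ a, (y a).IsSymmetric) (v : H) :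
    ⟪v, (∑ a, y a ^ 2) v⟫_𝕜 = ((∑ a, ‖y a v‖ ^ 2 : ℝ) : 𝕜) := by
  rw [_root_.sum_apply, inner_sum, RCLike.ofReal_sum]
  refine sum_congr rfl fun a _ => ?_
  rw [sq, mul_apply_eq_comp, RCLike.ofReal_pow, ← inner_self_eq_norm_sq_to_K]
  exact (hy a v (y a v)).symm

theorem squareFunctionLE_of_sqrt_norm_le (hx : ∀ a, (x a).IsSymmetric)
    (hnorm : √‖∑ a, x a ^ 2‖ ≤ s) : SquareFunctionLE x s := by
  intro v
  calc ∑ a, ‖x a v‖ ^ 2 = ‖⟪v, (∑ a, x a ^ 2) v⟫_𝕜‖ := by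
        rw [inner_sum_sq_apply hx, RCLike.norm_ofReal, abs_of_nonneg (by positivity)]
    _ ≤ ‖v‖ * ‖(∑ a, x a ^ 2) v‖ := norm_inner_le_norm _ _
    _ ≤ ‖v‖ * (s ^ 2 * ‖v‖) := by
        gcongr
        refine ContinuousLinearMap.le_of_opNorm_le _ ?_ v
        exact (Real.sqrt_le_left ((Real.sqrt_nonneg _).trans hnorm)).1 hnorm
    _ = s ^ 2 * ‖v‖ ^ 2 := by ring

theorem SquareFunctionLE.sub_one (hx : SquareFunctionLE x s)
    (hsum : ∑ a, x a = Fintype.card ι • (1 : H →L[𝕜] H)) :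
    SquareFunctionLE (fun a => x a - 1) s := by
  intro v
  have hmean : ∑ a, RCLike.re ⟪x a v, v⟫_𝕜 = Fintype.card ι * ‖v‖ ^ 2 := by
    rw [← map_sum, ← sum_inner, ← _root_.sum_apply, hsum, ← Nat.cast_smul_eq_nsmul 𝕜]
    rw [smul_apply, one_apply_eq_self, inner_smul_left, map_natCast, ← nsmul_eq_mul,
      map_nsmul, inner_self_eq_norm_sq, nsmul_eq_mul]
  calc ∑ a, ‖(x a - 1) v‖ ^ 2
      = ∑ a, (‖x a v‖ ^ 2 - 2 * RCLike.re ⟪x a v, v⟫_𝕜 + ‖v‖ ^ 2) := by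
        simp only [sub_apply, one_apply_eq_self, norm_sub_sq (𝕜 := 𝕜)]
    _ = ∑ a, ‖x a v‖ ^ 2 - Fintype.card ι * ‖v‖ ^ 2 := by
        rw [sum_add_distrib, sum_sub_distrib, ← mul_sum, hmean, sum_const, card_univ,
          nsmul_eq_mul]
        ring
    _ ≤ ∑ a, ‖x a v‖ ^ 2 := sub_le_self _ (by positivity)
    _ ≤ s ^ 2 * ‖v‖ ^ 2 := hx v

theorem SquareFunctionLE.norm_sq_apply_le (hS : SquareFunctionLE y s) (a : ι) (v : H) :
    ‖y a v‖ ^ 2 ≤ s ^ 2 * ‖v‖ ^ 2 :=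
  (single_le_sum (f := fun a => ‖y a v‖ ^ 2) (fun _ _ => sq_nonneg _) (mem_univ a)).trans (hS v)

theorem norm_sum_inner_sq_le (u v : ι → H) :
    ‖∑ a, ⟪u a, v a⟫_𝕜‖ ^ 2 ≤ (∑ a, ‖u a‖ ^ 2) * ∑ a, ‖v a‖ ^ 2 :=
  calc ‖∑ a, ⟪u a, v a⟫_𝕜‖ ^ 2 ≤ (∑ a, ‖u a‖ * ‖v a‖) ^ 2 := by
        gcongr
        exact (norm_sum_le _ _).trans (sum_le_sum fun a _ => norm_inner_le_norm _ _)
    _ ≤ _ := sum_mul_sq_le_sq_mul_sq _ _ _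

-- Duality: the row operator `v ↦ ∑ a, y a (v a)` is the adjoint of the column `u ↦ (y a u)_a`.
theorem SquareFunctionLE.norm_sq_sum_apply_le (hS : SquareFunctionLE y s)
    (hy : ∀ a, (y a).IsSymmetric) (v : ι → H) :
    ‖∑ a, y a (v a)‖ ^ 2 ≤ s ^ 2 * ∑ a, ‖v a‖ ^ 2 := by
  set u := ∑ a, y a (v a) with hu
  have hdual : ⟪u, u⟫_𝕜 = ∑ a, ⟪y a u, v a⟫_𝕜 := by
    conv_lhs => rw [hu, inner_sum]
    exact sum_congr rfl fun a _ => (hy a u (v a)).symm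
  have hsq : ‖u‖ ^ 2 * ‖u‖ ^ 2 ≤ (s ^ 2 * ∑ a, ‖v a‖ ^ 2) * ‖u‖ ^ 2 :=
    calc ‖u‖ ^ 2 * ‖u‖ ^ 2 = ‖⟪u, u⟫_𝕜‖ ^ 2 := by
          simp [inner_self_eq_norm_sq_to_K, ← sq]
      _ ≤ (∑ a, ‖y a u‖ ^ 2) * ∑ a, ‖v a‖ ^ 2 := hdual ▸ norm_sum_inner_sq_le _ _
      _ ≤ s ^ 2 * ‖u‖ ^ 2 * ∑ a, ‖v a‖ ^ 2 := by gcongr; exact hS u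
      _ = (s ^ 2 * ∑ a, ‖v a‖ ^ 2) * ‖u‖ ^ 2 := by ring
  rcases (sq_nonneg ‖u‖).eq_or_lt with h | h
  · rw [← h]; positivity
  · exact le_of_mul_le_mul_right hsq h

section MixedNorm

variable {B : Type*} [Fintype B] [DecidableEq B] [DecidableEq ι]

/-- The squared norm in `ℓ²(ι^O; H)` of the family obtained from `G` by summing out, inside the
norm, the coordinates in `C`; the coordinates outside `O ∪ C` are frozen at those of `i`. -/
noncomputable def marginalNormSq (O C : Finset B) (G : (B → ι) → H) (i : B → ι) : ℝ :=
  marginalSum O (fun j => ‖marginalSum C G j‖ ^ 2) i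

theorem SquareFunctionLE.marginalNormSq_insert_insert_le (hS : SquareFunctionLE y s)
    {O C : Finset B} {c : B} (hO : c ∉ O) (hC : c ∉ C) {G : (B → ι) → H}
    (hG : ∀ j a, G (update j c a) = G j) (i : B → ι) :
    marginalNormSq (insert c O) C (fun j => y (j c) (G j)) i ≤ s ^ 2 * marginalNormSq O C G i := by
  unfold marginalNormSq
  rw [marginalSum_insert' hO]
  refine marginalSum_le_const_mul (fun j => ?_) i
  simp only [marginalSum_map_of_notMem hC y, marginalSum_update hC, hG, update_self]
  exact hS _

theorem SquareFunctionLE.marginalNormSq_le (hS : SquareFunctionLE y s) (O : Finset B)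
    {C : Finset B} {c : B} (hC : c ∉ C) (G : (B → ι) → H) (i : B → ι) :
    marginalNormSq O C (fun j => y (j c) (G j)) i ≤ s ^ 2 * marginalNormSq O C G i := by
  refine marginalSum_le_const_mul (fun j => ?_) i
  rw [marginalSum_map_of_notMem hC y]
  exact hS.norm_sq_apply_le _ _

theorem SquareFunctionLE.marginalNormSq_le_insert (hS : SquareFunctionLE y s)
    (hy : ∀ a, (y a).IsSymmetric) {O C : Finset B} {c : B} (hO : c ∉ O) (hC : c ∉ C)
    (G : (B → ι) → H) (i : B → ι) :
    marginalNormSq O (insert c C) (fun j => y (j c) (G j)) i ≤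
      s ^ 2 * marginalNormSq (insert c O) C G i := by
  unfold marginalNormSq
  rw [marginalSum_insert' hO]
  refine marginalSum_le_const_mul (fun j => ?_) i
  simp only [marginalSum_insert hC, marginalSum_map_of_notMem hC y, update_self]
  exact hS.norm_sq_sum_apply_le hy _

-- Reading the word from right to left, a letter adds a coordinate at its first occurrence, and
-- may be summed out at a later one; as a column, a diagonal or a row operator, each costs `s`.
theorem SquareFunctionLE.marginalNormSq_word_le (hS : SquareFunctionLE y s)
    (hy : ∀ a, (y a).IsSymmetric) (v : ι → H) (b : B) (w : List B) (C : Finset B)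
    (hC : ∀ c ∈ C, 2 ≤ (b :: w).count c) (i : B → ι) :
    marginalNormSq ((b :: w).toFinset \ C) C
      (fun j => (w.map fun c => y (j c)).prod (v (j b))) i ≤
      (s ^ 2) ^ w.length * ∑ a, ‖v a‖ ^ 2 := by
  induction w generalizing C with
  | nil =>
    obtain rfl : C = ∅ := eq_empty_of_forall_notMem fun c hc => by
      have := (hC c hc).trans List.count_le_length
      simp at this
    rw [List.toFinset_cons, List.toFinset_nil, sdiff_empty, marginalNormSq,
      marginalSum_insert' (notMem_empty b)]
    simp [marginalSum_empty]
  | cons c w ih =>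
    simp only [List.map_cons, List.prod_cons, mul_apply_eq_comp, List.length_cons,
      pow_succ' _ w.length, mul_assoc]
    by_cases hcC : c ∈ C
    · have hle := hS.marginalNormSq_le_insert hy (O := (b :: c :: w).toFinset \ C)
        (by simp [hcC]) (notMem_erase c C) (fun j => (w.map fun e => y (j e)).prod (v (j b))) i
      have hopen : insert c ((b :: c :: w).toFinset \ C) = (b :: w).toFinset \ C.erase c := by
        have : c ∈ b :: w := List.count_pos_iff.1 (by have := hC c hcC; grind)
        ext e
        grind [List.mem_toFinset]
      rw [insert_erase hcC, hopen] at hle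
      refine hle.trans (mul_le_mul_of_nonneg_left (ih (C.erase c) fun e he => ?_) (sq_nonneg s))
      have := hC e
      grind
    · have hcount : ∀ e ∈ C, 2 ≤ (b :: w).count e := fun e he => by have := hC e he; grind
      refine le_trans ?_ (mul_le_mul_of_nonneg_left (ih C hcount) (sq_nonneg s))
      by_cases hcw : c ∈ b :: w
      · have hopen : (b :: c :: w).toFinset \ C = (b :: w).toFinset \ C := by
          ext e
          grind [List.mem_toFinset]
        rw [hopen]
        exact hS.marginalNormSq_le _ hcC _ i
      · have hopen : (b :: c :: w).toFinset \ C = insert c ((b :: w).toFinset \ C) := by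
          ext e
          grind [List.mem_toFinset]
        rw [hopen]
        refine hS.marginalNormSq_insert_insert_le
          (fun hc => hcw (List.mem_toFinset.1 (mem_sdiff.1 hc).1)) hcC (fun j a => ?_) i
        have hletters : ∀ e ∈ b :: w, update j c a e = j e := fun e he =>
          update_of_ne (ne_of_mem_of_not_mem he hcw) _ _
        rw [hletters b List.mem_cons_self,
          List.map_congr_left fun e he => by rw [hletters e (List.mem_cons_of_mem b he)]]

end MixedNorm

theorem SquareFunctionLE.norm_sum_inner_word_le {B : Type*} [Fintype B] [DecidableEq B]
    (hS : SquareFunctionLE y s) (hs : 0 ≤ s) (hy : ∀ a, (y a).IsSymmetric) (v : ι → H)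
    (b c : B) (w : List B) (hw : ∀ e, 2 ≤ (c :: b :: w).count e) :
    ‖∑ j : B → ι, ⟪v (j c), (w.map fun e => y (j e)).prod (v (j b))⟫_𝕜‖ ≤
      s ^ w.length * ∑ a, ‖v a‖ ^ 2 := by
  classical
  rcases isEmpty_or_nonempty (B → ι) with _ | ⟨⟨i⟩⟩
  · simp only [univ_eq_empty, sum_empty, norm_zero]
    positivity
  set C : Finset B := univ.erase c
  set G : (B → ι) → H := fun j => (w.map fun e => y (j e)).prod (v (j b))
  set V : ι → H := fun a => marginalSum C G (update i c a)
  have hV : ∑ a, ‖V a‖ ^ 2 ≤ (s ^ 2) ^ w.length * ∑ a, ‖v a‖ ^ 2 := by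
    have hopen : (b :: w).toFinset \ C = insert c ∅ := by
      have : c ∈ b :: w := List.count_pos_iff.1 (by have := hw c; grind)
      ext e
      grind [List.mem_toFinset]
    have h := hS.marginalNormSq_word_le hy v b w C (fun e he => by have := hw e; grind) i
    rw [hopen, marginalNormSq, marginalSum_insert (notMem_empty c)] at h
    simpa only [marginalSum_empty] using h
  have hsum : ∑ j, ⟪v (j c), G j⟫_𝕜 = ∑ a, ⟪v a, V a⟫_𝕜 := by
    rw [← marginalSum_univ _ i, ← insert_erase (mem_univ c),
      marginalSum_insert (notMem_erase c univ)]
    refine sum_congr rfl fun a _ => ?_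
    simpa using marginalSum_map_of_notMem (notMem_erase c univ) (fun a => innerₛₗ 𝕜 (v a)) G
      (update i c a)
  rw [hsum]
  refine le_of_sq_le_sq ?_ (by positivity)
  calc _ ≤ (∑ a, ‖v a‖ ^ 2) * ∑ a, ‖V a‖ ^ 2 := norm_sum_inner_sq_le _ _
    _ ≤ (∑ a, ‖v a‖ ^ 2) * ((s ^ 2) ^ w.length * ∑ a, ‖v a‖ ^ 2) := by gcongr
    _ = (s ^ w.length * ∑ a, ‖v a‖ ^ 2) ^ 2 := by ring

theorem SquareFunctionLE.norm_inner_sum_prod_map_le {B : Type*} [Fintype B] [DecidableEq B]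
    (hS : SquareFunctionLE y s) (hs : 0 ≤ s) (hy : ∀ a, (y a).IsSymmetric)
    (hy0 : ∑ a, y a = 0) {w : List B} {m : ℕ} (hlen : w.length = m + 2) (hw : ∀ b, b ∈ w)
    (ξ : H) :
    ‖⟪ξ, (∑ j : B → ι, (w.map fun b => y (j b)).prod) ξ⟫_𝕜‖ ≤ s ^ m * ∑ a, ‖y a ξ‖ ^ 2 := by
  by_cases h : ∃ b, w.count b = 1
  · obtain ⟨b, hb⟩ := h
    rw [sum_prod_map_eq_zero hy0 hb, zero_apply, inner_zero_right, norm_zero]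
    positivity
  obtain ⟨c, t, rfl⟩ := List.exists_cons_of_length_eq_add_one hlen
  obtain rfl | ⟨w, b, rfl⟩ := List.eq_nil_or_concat' t
  · simp at hlen
  have hcount : ∀ e, 2 ≤ (c :: b :: w).count e := by
    intro e
    have hpos := List.count_pos_iff.2 (hw e)
    have hne : (c :: (w ++ [b])).count e ≠ 1 := fun he => h ⟨e, he⟩
    have hperm : (c :: (w ++ [b])).count e = (c :: b :: w).count e :=
      ((List.perm_append_singleton b w).cons c).count_eq e
    lia
  obtain rfl : w.length = m := by simpa using hlen
  convert hS.norm_sum_inner_word_le hs hy (fun a => y a ξ) b c w hcount using 2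
  rw [_root_.sum_apply, inner_sum]
  refine sum_congr rfl fun j _ => ?_
  simp only [List.map_cons, List.map_append, List.map_nil, List.prod_cons, List.prod_append,
    List.prod_nil, mul_one, mul_apply_eq_comp]
  exact (hy (j c) ξ _).symm

end SquareFunction

section Injective

variable {κ ι M : Type*} [Fintype κ] [DecidableEq κ] [DecidableEq ι]

theorem sum_sign_of_comp_eq (i : κ → ι) :
    (∑ σ ∈ univ.filter fun σ : Equiv.Perm κ => i ∘ σ = i, (σ.sign : ℤ)) =
      if Injective i then 1 else 0 := by
  let E : Matrix κ κ ℤ := (1 : Matrix ι ι ℤ).submatrix i i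
  have hdet : E.det = ∑ σ ∈ univ.filter fun σ : Equiv.Perm κ => i ∘ σ = i, (σ.sign : ℤ) := by
    rw [Matrix.det_apply', sum_filter]
    refine sum_congr rfl fun σ _ => ?_
    simp [E, Matrix.one_apply, prod_ite_zero, funext_iff]
  rw [← hdet]
  split_ifs with hi
  · exact (congrArg _ (Matrix.submatrix_one i hi)).trans Matrix.det_one
  · obtain ⟨a, b, hab, hne⟩ := not_injective_iff.1 hi
    exact Matrix.det_zero_of_row_eq hne (funext fun c =>
      congrFun (congrArg (1 : Matrix ι ι ℤ) hab) (i c))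

variable [Fintype ι]

theorem sum_injective_eq_sum_perm [AddCommGroup M] (G : (κ → ι) → M) :
    ∑ i : κ → ι with Injective i, G i =
      ∑ σ : Equiv.Perm κ, (σ.sign : ℤ) • ∑ i with i ∘ ⇑σ = i, G i := by
  have h (i : κ → ι) : (if Injective i then G i else 0) =
      ∑ σ : Equiv.Perm κ, if i ∘ σ = i then (σ.sign : ℤ) • G i else 0 := by
    rw [← sum_filter, ← sum_smul, sum_sign_of_comp_eq, ite_smul, one_smul, zero_smul]
  simp_rw [sum_filter, h, smul_sum, smul_ite, smul_zero]
  exact sum_comm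

theorem sum_comp_eq_self [AddCommMonoid M] (f : κ → κ) [Fintype (Coequalizer f id)]
    [DecidableEq (Coequalizer f id)] (G : (κ → ι) → M) :
    ∑ i with i ∘ f = i, G i = ∑ j : Coequalizer f id → ι, G (j ∘ Coequalizer.mk f id) := by
  symm
  refine sum_bij (fun j _ => j ∘ Coequalizer.mk f id) (fun j _ => ?_) (fun j _ j' _ h => ?_)
    (fun i hi => ?_) fun _ _ => rfl
  · simp only [mem_filter_univ]
    ext t
    exact congrArg j (Coequalizer.condition f id t)
  · exact (Coequalizer.mk_surjective f id).injective_comp_right h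
  · have hi' : i ∘ f = i := (mem_filter.1 hi).2
    exact ⟨Coequalizer.desc f id i hi', mem_univ _, rfl⟩

variable {𝕜 H : Type*} [RCLike 𝕜] [NormedAddCommGroup H] [InnerProductSpace 𝕜 H]
  {y : ι → H →L[𝕜] H} {s : ℝ}

theorem SquareFunctionLE.norm_inner_sum_injective_le (hS : SquareFunctionLE y s) (hs : 0 ≤ s)
    (hy : ∀ a, (y a).IsSymmetric) (hy0 : ∑ a, y a = 0) {l : List κ} {m : ℕ}
    (hlen : l.length = m + 2) (hl : ∀ k, k ∈ l) (ξ : H) :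
    ‖⟪ξ, (∑ i : κ → ι with Injective i, (l.map fun k => y (i k)).prod) ξ⟫_𝕜‖ ≤
      (Fintype.card κ).factorial * (s ^ m * ∑ a, ‖y a ξ‖ ^ 2) := by
  classical
  rw [sum_injective_eq_sum_perm, _root_.sum_apply, inner_sum, ← Fintype.card_perm,
    ← nsmul_eq_mul, ← card_univ]
  refine (norm_sum_le _ _).trans (sum_le_card_nsmul _ _ _ fun σ _ => ?_)
  have : Finite (Coequalizer σ id) := .of_surjective _ (Coequalizer.mk_surjective σ id)
  have : Fintype (Coequalizer σ id) := .ofFinite _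
  have hquot (b : Coequalizer σ id) : b ∈ l.map (Coequalizer.mk σ id) := by
    obtain ⟨t, rfl⟩ := Coequalizer.mk_surjective σ id b
    exact List.mem_map_of_mem (hl t)
  have hcycles := hS.norm_inner_sum_prod_map_le hs hy hy0 (by simpa using hlen) hquot ξ
  simp only [List.map_map] at hcycles
  rw [sum_comp_eq_self]
  rcases Int.units_eq_one_or σ.sign with h | h <;> simpa [h, comp_def] using hcycles

end Injective

section ListExpansion

variable {α M : Type*}

theorem prod_map_one_add {A : Type*} [Semiring A] (f : α → A) (l : List α) :
    (l.map fun a => 1 + f a).prod = (l.sublists'.map fun l' => (l'.map f).prod).sum := by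
  induction l with
  | nil => simp
  | cons a l ih =>
    simp [List.sublists'_cons, ih, add_mul, Function.comp_def, List.sum_map_mul_left]

theorem sum_map_sublists'_length [AddCommMonoid M] (g : ℕ → M) (l : List α) :
    (l.sublists'.map fun l' => g l'.length).sum =
      ∑ k ∈ range (l.length + 1), l.length.choose k • g k := by
  induction l generalizing g with
  | nil => simp
  | cons a l ih =>
    rw [List.length_cons, sum_choose_succ_nsmul fun k _ => g k, ← ih, ← ih fun k => g (k + 1)]
    simp [List.sublists'_cons, Function.comp_def]

end ListExpansion

theorem card_nsmul_sum_smul {G X M : Type*} [Group G] [Fintype G] [Fintype X] [MulAction G X]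
    [MulAction.IsPretransitive G X] [AddCommMonoid M] (F : X → M) (x : X) :
    Fintype.card X • ∑ g : G, F (g • x) = Fintype.card G • ∑ x, F x := by
  have hconst (x' : X) : ∑ g : G, F (g • x) = ∑ g : G, F (g • x') := by
    obtain ⟨h, rfl⟩ := MulAction.exists_smul_eq G x' x
    simpa only [Equiv.coe_mulRight, mul_smul] using
      Equiv.sum_comp (Equiv.mulRight h) fun g : G => F (g • x')
  calc Fintype.card X • ∑ g : G, F (g • x) = ∑ x', ∑ g : G, F (g • x') := by
        rw [← sum_congr rfl fun x' _ => hconst x', sum_const, card_univ]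
    _ = ∑ g : G, ∑ x', F (g • x') := sum_comm
    _ = ∑ _ : G, ∑ x, F x := sum_congr rfl fun g _ => Equiv.sum_comp (MulAction.toPerm g) F
    _ = Fintype.card G • ∑ x, F x := by rw [sum_const, card_univ]

section AvgProd

variable {A : Type*} [Ring A] [Module ℝ A] {n d : ℕ} {y : Fin n → A}

theorem avgProd_eq_inv_descFactorial_smul (n d : ℕ) (y : Fin n → A) :
    avgProd n d y = (n.descFactorial d : ℝ)⁻¹ •
      ∑ i : Fin d → Fin n with Injective i, ((List.finRange d).map fun k => y (i k)).prod := by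
  rcases le_or_gt d n with hd | hd
  · rw [avgProd, ← Nat.factorial_mul_descFactorial hd, Nat.cast_mul, ← div_div,
      div_self (by positivity), one_div]
  · have hempty (i : Fin d → Fin n) : ¬Injective i := fun hi =>
      hd.not_ge (by simpa using Fintype.card_le_of_injective i hi)
    simp [avgProd, hempty]

theorem avgProd_eq_sum_perm {l : List (Fin n)} (hl : l.Nodup) (y : Fin n → A) :
    avgProd n l.length y =
      (n.factorial : ℝ)⁻¹ • ∑ π : Equiv.Perm (Fin n), (l.map fun b => y (π b)).prod := by
  have hd : l.length ≤ n := by simpa using hl.length_le_card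
  have := Equiv.Perm.isMultiplyPretransitive (Fin n) l.length
  have haverage := card_nsmul_sum_smul (G := Equiv.Perm (Fin n))
    (fun e : Fin l.length ↪ Fin n => ((List.finRange l.length).map fun k => y (e k)).prod)
    ⟨l.get, List.nodup_iff_injective_get.1 hl⟩
  have hword (π : Equiv.Perm (Fin n)) :
      ((List.finRange l.length).map fun k => y (π (l.get k))).prod =
        (l.map fun b => y (π b)).prod := by
    conv_rhs => rw [← List.map_get_finRange l, List.map_map]
    rfl
  simp only [Function.Embedding.smul_apply, Function.Embedding.coeFn_mk, Equiv.Perm.smul_def,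
    hword, Fintype.card_embedding_eq, Fintype.card_fin, Fintype.card_perm] at haverage
  have hinj : ∑ i : Fin l.length → Fin n with Injective i,
      ((List.finRange l.length).map fun k => y (i k)).prod =
      ∑ e : Fin l.length ↪ Fin n, ((List.finRange l.length).map fun k => y (e k)).prod := by
    rw [← (Equiv.subtypeInjectiveEquivEmbedding _ _).sum_comp]
    exact sum_subtype _ (by simp) _
  rw [avgProd_eq_inv_descFactorial_smul, hinj, inv_smul_eq_iff₀, smul_comm, eq_comm,
    inv_smul_eq_iff₀]
  · simpa only [Nat.cast_smul_eq_nsmul] using haverage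
  · positivity
  · exact_mod_cast (Nat.descFactorial_pos.2 hd).ne'

theorem exists_nodup_length_eq (hd : d ≤ n) : ∃ l : List (Fin n), l.Nodup ∧ l.length = d :=
  ⟨(List.finRange n).take d, (List.nodup_finRange n).sublist (List.take_sublist _ _), by simpa⟩

theorem avgProd_one_add (hd : d ≤ n) (y : Fin n → A) :
    avgProd n d (fun a => 1 + y a) = ∑ k ∈ range (d + 1), d.choose k • avgProd n k y := by
  obtain ⟨l, hl, rfl⟩ := exists_nodup_length_eq hd
  have hnodup := List.nodup_sublists'.2 hl
  rw [← sum_map_sublists'_length fun k => avgProd n k y, avgProd_eq_sum_perm hl]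
  simp_rw [prod_map_one_add, ← List.sum_toFinset _ hnodup]
  rw [sum_comm, smul_sum]
  refine sum_congr rfl fun l' hl' => (avgProd_eq_sum_perm (hl.sublist ?_) y).symm
  exact List.mem_sublists'.1 (List.mem_toFinset.1 hl')

theorem avgProd_zero (y : Fin n → A) : avgProd n 0 y = 1 := by
  rw [avgProd_eq_inv_descFactorial_smul]
  simp [filter_true_of_mem, injective_of_subsingleton]

theorem avgProd_one_s12 (hy0 : ∑ a, y a = 0) : avgProd n 1 y = 0 := by
  have : ∑ i : Fin 1 → Fin n, ((List.finRange 1).map fun k => y (i k)).prod = ∑ a, y a := by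
    rw [← (Equiv.funUnique (Fin 1) (Fin n)).sum_comp]
    simp [List.finRange_succ]
  rw [avgProd, filter_true_of_mem fun i _ => injective_of_subsingleton i, this, hy0, smul_zero]

theorem avgProd_two (hy0 : ∑ a, y a = 0) :
    avgProd n 2 y = -(n.descFactorial 2 : ℝ)⁻¹ • ∑ a, y a ^ 2 := by
  have hsum : ∑ i : Fin 2 → Fin n with Injective i, ((List.finRange 2).map fun k => y (i k)).prod =
      ∑ a, ∑ b with a ≠ b, y a * y b := by
    simp_rw [sum_filter]
    rw [← (finTwoArrowEquiv (Fin n)).symm.sum_comp, Fintype.sum_prod_type]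
    simp [List.finRange_succ, Function.Injective, Fin.forall_fin_two, eq_comm]
  have hdiag (a : Fin n) : ∑ b with a ≠ b, y a * y b = -y a ^ 2 := by
    rw [filter_ne, sum_erase_eq_sub (mem_univ a), ← mul_sum, hy0, mul_zero, zero_sub, sq]
  rw [avgProd_eq_inv_descFactorial_smul, hsum, sum_congr rfl fun a _ => hdiag a,
    sum_neg_distrib, smul_neg, neg_smul]

end AvgProd

theorem descFactorial_div_descFactorial_succ_le {d n : ℕ} (hd : d ≤ n) (k : ℕ) :
    (d.descFactorial (k + 1) / n.descFactorial (k + 1) : ℝ) ≤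
      d.descFactorial k / n.descFactorial k * (d / n) := by
  rw [Nat.descFactorial_succ, Nat.descFactorial_succ, Nat.cast_mul, Nat.cast_mul,
    mul_div_mul_comm, mul_comm]
  refine mul_le_mul_of_nonneg_left ?_ (by positivity)
  rcases le_or_gt d k with hk | hk
  · rw [Nat.sub_eq_zero_of_le hk, Nat.cast_zero, zero_div]
    positivity
  · have hn : (k : ℝ) < n := by exact_mod_cast hk.trans_le hd
    have hd' : (d : ℝ) ≤ n := by exact_mod_cast hd
    rw [Nat.cast_sub hk.le, Nat.cast_sub (hk.le.trans hd),
      div_le_div_iff₀ (by linarith) (k.cast_nonneg.trans_lt hn)]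
    linarith [mul_le_mul_of_nonneg_left hd' k.cast_nonneg]

theorem descFactorial_div_descFactorial_add_le {d n : ℕ} (hd : d ≤ n) (k j : ℕ) :
    (d.descFactorial (k + j) / n.descFactorial (k + j) : ℝ) ≤
      d.descFactorial k / n.descFactorial k * (d / n) ^ j := by
  induction j with
  | zero => simp
  | succ j ih =>
    refine (descFactorial_div_descFactorial_succ_le hd (k + j)).trans ?_
    rw [pow_succ, ← mul_assoc]
    gcongr

-- The geometric series `∑ 3⁻ʲ` over `j ≥ 1` is exactly compensated by the main term `f 0`.
theorem sum_range_nonpos_of_le_pow_third {f : ℕ → ℝ} {c : ℝ} (hc : 0 ≤ c)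
    (h0 : f 0 ≤ -(c / 2)) (h : ∀ j, f (j + 1) ≤ c * (1 / 3) ^ (j + 1)) (e : ℕ) :
    ∑ j ∈ range e, f j ≤ 0 := by
  rcases e with _ | e
  · simp
  have hgeom : ∑ j ∈ range e, (1 / 3 : ℝ) ^ (j + 1) ≤ 1 / 2 := by
    simp_rw [pow_succ, ← sum_mul]
    rw [geom_sum_eq (by norm_num)]
    have : (0 : ℝ) ≤ (1 / 3) ^ e := by positivity
    ring_nf at this ⊢
    linarith
  calc ∑ j ∈ range (e + 1), f j = ∑ j ∈ range e, f (j + 1) + f 0 := sum_range_succ' f e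
    _ ≤ ∑ j ∈ range e, c * (1 / 3) ^ (j + 1) + -(c / 2) :=
        add_le_add (sum_le_sum fun j _ => h j) h0
    _ ≤ 0 := by
        rw [← mul_sum]
        linarith [mul_le_mul_of_nonneg_left hgeom hc]

section Order

variable {𝕜 H : Type*} [RCLike 𝕜] [NormedAddCommGroup H] [InnerProductSpace 𝕜 H]

theorem inner_prod_map_apply {α : Type*} {f : α → H →L[𝕜] H} (hf : ∀ a, (f a).IsSymmetric)
    (l : List α) (u v : H) :
    ⟪(l.map f).prod u, v⟫_𝕜 = ⟪u, (l.reverse.map f).prod v⟫_𝕜 := by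
  induction l generalizing v with
  | nil => simp
  | cons a l ih =>
    simp only [List.map_cons, List.prod_cons, mul_apply_eq_comp, List.reverse_cons,
      List.map_append, List.prod_append, List.map_nil, List.prod_nil, mul_one]
    exact (hf a _ v).trans (ih _)

variable [NormedSpace ℝ H] [IsScalarTower ℝ 𝕜 H] {n d : ℕ} {x y : Fin n → H →L[𝕜] H} {s : ℝ}

theorem isSymmetric_avgProd (hd : d ≤ n) (hx : ∀ a, (x a).IsSymmetric) :
    (avgProd n d x).IsSymmetric := by
  obtain ⟨l, hl, rfl⟩ := exists_nodup_length_eq hd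
  have hrev : avgProd n l.length x = avgProd n l.reverse.length x := by rw [List.length_reverse]
  intro u v
  conv_rhs => rw [hrev, avgProd_eq_sum_perm (List.nodup_reverse.2 hl)]
  rw [avgProd_eq_sum_perm hl]
  simp only [ContinuousLinearMap.coe_coe, smul_apply, _root_.sum_apply,
    inner_smul_left_eq_smul, inner_smul_right_eq_smul, sum_inner, inner_sum]
  simp only [inner_prod_map_apply fun _ => hx _]

theorem re_inner_avgProd_two (hy : ∀ a, (y a).IsSymmetric) (hy0 : ∑ a, y a = 0) (ξ : H) :
    RCLike.re ⟪ξ, avgProd n 2 y ξ⟫_𝕜 = -((n.descFactorial 2 : ℝ)⁻¹ * ∑ a, ‖y a ξ‖ ^ 2) := by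
  rw [avgProd_two hy0, smul_apply, inner_smul_right_eq_smul, inner_sum_sq_apply hy,
    RCLike.smul_re, RCLike.ofReal_re, neg_mul]

theorem SquareFunctionLE.norm_inner_avgProd_le (hS : SquareFunctionLE y s) (hs : 0 ≤ s)
    (hy : ∀ a, (y a).IsSymmetric) (hy0 : ∑ a, y a = 0) (m : ℕ) (ξ : H) :
    ‖⟪ξ, avgProd n (m + 2) y ξ⟫_𝕜‖ ≤
      (m + 2).factorial / n.descFactorial (m + 2) * (s ^ m * ∑ a, ‖y a ξ‖ ^ 2) := by
  have h := hS.norm_inner_sum_injective_le hs hy hy0 (List.length_finRange (n := m + 2))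
    List.mem_finRange ξ
  rw [Fintype.card_fin] at h
  rw [avgProd_eq_inv_descFactorial_smul, smul_apply, inner_smul_right_eq_smul, norm_smul,
    norm_inv, Real.norm_natCast, div_mul_eq_mul_div, div_eq_inv_mul]
  gcongr

theorem SquareFunctionLE.choose_mul_re_inner_avgProd_le (hd : 1 ≤ d) (hdn : d ≤ n)
    (hS : SquareFunctionLE y (n / (3 * d))) (hy : ∀ a, (y a).IsSymmetric)
    (hy0 : ∑ a, y a = 0) (m : ℕ) (ξ : H) :
    d.choose (m + 2) * RCLike.re ⟪ξ, avgProd n (m + 2) y ξ⟫_𝕜 ≤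
      d.descFactorial 2 / n.descFactorial 2 * (∑ a, ‖y a ξ‖ ^ 2) * (1 / 3) ^ m := by
  set q := ∑ a, ‖y a ξ‖ ^ 2
  set s : ℝ := n / (3 * d)
  have hratio : (d / n : ℝ) * s = 1 / 3 := by
    have : (d : ℝ) ≠ 0 := by positivity
    have : (n : ℝ) ≠ 0 := by have := hd.trans hdn; positivity
    simp only [s]
    field_simp
  calc d.choose (m + 2) * RCLike.re ⟪ξ, avgProd n (m + 2) y ξ⟫_𝕜
      ≤ d.choose (m + 2) * ((m + 2).factorial / n.descFactorial (m + 2) * (s ^ m * q)) := by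
        gcongr
        exact (RCLike.re_le_norm _).trans (hS.norm_inner_avgProd_le (by positivity) hy hy0 m ξ)
    _ = d.descFactorial (m + 2) / n.descFactorial (m + 2) * (s ^ m * q) := by
        rw [Nat.descFactorial_eq_factorial_mul_choose d, Nat.cast_mul]
        ring
    _ ≤ d.descFactorial 2 / n.descFactorial 2 * (d / n) ^ m * (s ^ m * q) := by
        gcongr
        simpa only [add_comm 2] using descFactorial_div_descFactorial_add_le hdn 2 m
    _ = d.descFactorial 2 / n.descFactorial 2 * q * (1 / 3) ^ m := by
        rw [← hratio, mul_pow]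
        ring

theorem SquareFunctionLE.re_inner_avgProd_one_add_le (hd : 1 ≤ d) (hdn : d ≤ n)
    (hS : SquareFunctionLE y (n / (3 * d))) (hy : ∀ a, (y a).IsSymmetric)
    (hy0 : ∑ a, y a = 0) (ξ : H) :
    RCLike.re ⟪ξ, avgProd n d (fun a => 1 + y a) ξ⟫_𝕜 ≤ ‖ξ‖ ^ 2 := by
  set q := ∑ a, ‖y a ξ‖ ^ 2
  set t : ℕ → ℝ := fun k => d.choose k * RCLike.re ⟪ξ, avgProd n k y ξ⟫_𝕜 with ht
  have hexpand :
      RCLike.re ⟪ξ, avgProd n d (fun a => 1 + y a) ξ⟫_𝕜 = ∑ k ∈ range (d + 1), t k := by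
    rw [avgProd_one_add hdn, _root_.sum_apply, inner_sum, map_sum]
    refine sum_congr rfl fun k _ => ?_
    rw [smul_apply, ← Nat.cast_smul_eq_nsmul ℝ, inner_smul_right_eq_smul, RCLike.smul_re]
  have hzero : t 0 = ‖ξ‖ ^ 2 := by simp [ht, avgProd_zero]
  have hone : t 1 = 0 := by simp [ht, avgProd_one_s12 hy0]
  have htwo : t 2 = -(d.descFactorial 2 / n.descFactorial 2 * q / 2) := by
    simp only [ht]
    rw [re_inner_avgProd_two hy hy0, Nat.descFactorial_eq_factorial_mul_choose d,
      Nat.factorial_two]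
    push_cast
    ring
  have htail := sum_range_nonpos_of_le_pow_third (f := fun j => t (j + 2)) (by positivity)
    htwo.le (fun j => hS.choose_mul_re_inner_avgProd_le hd hdn hy hy0 (j + 1) ξ) (d - 1)
  rw [hexpand, ← Nat.sub_add_cancel hd, sum_range_succ', sum_range_succ', hzero, hone]
  linarith

end Order

end

theorem avgProd_le_one_order_general {𝕜 H : Type*} [RCLike 𝕜] [NormedAddCommGroup H]
    [InnerProductSpace 𝕜 H] [NormedSpace ℝ H] [IsScalarTower ℝ 𝕜 H] (n d : ℕ) (hd : 1 ≤ d)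
    (hdn : d ≤ n) (x : Fin n → H →L[𝕜] H) (hx : ∀ j, (x j).IsSymmetric)
    (hsum : ∑ i, x i = n • (1 : H →L[𝕜] H))
    (hnorm : Real.sqrt ‖∑ i, (x i) ^ 2‖ ≤ (n : ℝ) / (3 * d)) :
    ((1 : H →L[𝕜] H) - avgProd n d x).IsPositive := by
  set y : Fin n → H →L[𝕜] H := fun j => x j - 1
  have hx_eq : x = fun j => 1 + y j := funext fun j => (add_sub_cancel 1 (x j)).symm
  have hsum_card : ∑ j, x j = Fintype.card (Fin n) • (1 : H →L[𝕜] H) := by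
    rw [Fintype.card_fin, hsum]
  have hy (j : Fin n) : (y j).IsSymmetric := (hx j).sub .one
  have hy0 : ∑ j, y j = 0 := by simp [y, Finset.sum_sub_distrib, hsum]
  have hS : SquareFunctionLE y (n / (3 * d)) :=
    (squareFunctionLE_of_sqrt_norm_le hx hnorm).sub_one hsum_card
  refine ⟨.sub .one (isSymmetric_avgProd hdn hx), fun ξ => ?_⟩
  rw [ContinuousLinearMap.reApplyInnerSelf_apply, inner_re_symm, sub_apply, one_apply_eq_self,
    inner_sub_right, map_sub, inner_self_eq_norm_sq, hx_eq]
  exact sub_nonneg.2 (hS.re_inner_avgProd_one_add_le hd hdn hy hy0 ξ)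

/-- AGM inequality in the order sense: if `x_1, …, x_n` are self-adjoint bounded
operators on a complex Hilbert space with `∑ x_i = n • 1` (so `P_1(x_1,…,x_n) = 1`)
and `‖(∑ x_i²)^(1/2)‖ ≤ n/(3d)`, then `P_d(x_1,…,x_n) ≤ 1`, i.e.
`1 - P_d(x_1,…,x_n)` is a positive operator. -/
theorem avgProd_le_one_order {H : Type*} [NormedAddCommGroup H]
    [InnerProductSpace ℂ H] [CompleteSpace H] (n d : ℕ) (hd : 1 ≤ d) (hdn : d ≤ n)
    (x : Fin n → H →L[ℂ] H) (hx : ∀ j, IsSelfAdjoint (x j))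
    (hsum : ∑ i, x i = n • (1 : H →L[ℂ] H))
    (hnorm : Real.sqrt ‖∑ i, (x i) ^ 2‖ ≤ (n : ℝ) / (3 * d)) :
    ((1 : H →L[ℂ] H) - avgProd n d x).IsPositive :=
  avgProd_le_one_order_general n d hd hdn x
    (fun j => ContinuousLinearMap.isSelfAdjoint_iff_isSymmetric.1 (hx j)) hsum hnorm
end
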